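/- Let q ≥ 1 and let Q be the presented group on two generators a, b with relators a^{2q} and a⁻¹bab (i.e., Q = ⟨a, b | a^{2q} = 1, a⁻¹ba = b⁻¹⟩). Then the center Z(Q) is the subgroup generated by the image of a², it is cyclic of order q, every element z ∈ Z(Q) satisfies z^q = 1 (so Z(Q) = Z_q(Q)), and the quotient Q/Z(Q) is isomorphic to the infinite dihedral group D∞. -/

import Mathlib

/-!
Write `a`, `b` for the generators of `Q`. The relation `a⁻¹ba = b⁻¹` gives `b^j a = a b^(-j)`, so
every element of `Q` has the form `a^i b^j`, and `a²` is central. The assignment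
`a ↦ sr 0`, `b ↦ r 1` defines a surjection `QGrp.toDihedral` onto `D∞`; by the normal form its
kernel is `⟨a²⟩`. As `D∞` has trivial center, `Z(Q)` lies in this kernel, hence
`Z(Q) = ker = ⟨a²⟩`, and the first isomorphism theorem gives `Q/Z(Q) ≅ D∞`.
Finally `a` has order exactly `2q`, because `a ↦ 1`, `b ↦ 0` defines a homomorphism
`QGrp.toZMod` onto `ℤ/2q`; so `a²` has order `q`.
-/

/-- The relators `a^(2q), a⁻¹bab` of the group `Q = ⟨a, b ∣ a^(2q) = 1, a⁻¹ba = b⁻¹⟩`,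
where `a` is the first and `b` the second free generator. -/
def QRels (q : ℕ) : Set (FreeGroup (Fin 2)) :=
  {(FreeGroup.of 0) ^ (2 * q),
   (FreeGroup.of 0)⁻¹ * FreeGroup.of 1 * FreeGroup.of 0 * FreeGroup.of 1}

/-- `Q = ⟨a, b ∣ a^(2q) = 1, a⁻¹ba = b⁻¹⟩`. -/
abbrev QGrp (q : ℕ) : Type := PresentedGroup (QRels q)

namespace QGrp

variable (q : ℕ)

/-- The generator `a` of `Q`. -/
def a : QGrp q := PresentedGroup.of 0

/-- The generator `b` of `Q`. -/
def b : QGrp q := PresentedGroup.of 1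

lemma a_pow : a q ^ (2 * q) = 1 :=
  PresentedGroup.one_of_mem (rels := QRels q) (x := FreeGroup.of 0 ^ (2 * q)) (by simp [QRels])

lemma rel : (a q)⁻¹ * b q * a q * b q = 1 :=
  PresentedGroup.one_of_mem (rels := QRels q)
    (x := (FreeGroup.of 0)⁻¹ * FreeGroup.of 1 * FreeGroup.of 0 * FreeGroup.of 1)
    (by simp [QRels])

lemma semiconj_a : SemiconjBy (a q) (b q)⁻¹ (b q) := by
  have h := mul_eq_one_iff_eq_inv.mp (rel q)
  rw [SemiconjBy, ← h]
  group

lemma zpow_b_mul_a (j : ℤ) : b q ^ j * a q = a q * b q ^ (-j) := by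
  have h := (semiconj_a q).zpow_right j
  rw [inv_zpow'] at h
  exact h.symm

lemma zpow_b_mul_a_inv (j : ℤ) : b q ^ j * (a q)⁻¹ = (a q)⁻¹ * b q ^ (-j) := by
  have h := zpow_b_mul_a q (-j)
  rw [neg_neg] at h
  rw [mul_inv_eq_iff_eq_mul, mul_assoc, h, inv_mul_cancel_left]

lemma exists_normal_form (x : QGrp q) : ∃ i j : ℤ, x = a q ^ i * b q ^ j := by
  have hx : x ∈ Subgroup.closure (Set.range (PresentedGroup.of (rels := QRels q))) := by
    rw [PresentedGroup.closure_range_of]; trivial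
  induction hx using Subgroup.closure_induction_right with
  | one => exact ⟨0, 0, by simp⟩
  | mul_right x hx y hy ih =>
    obtain ⟨i, j, rfl⟩ := ih
    obtain ⟨k, rfl⟩ := hy
    fin_cases k
    · refine ⟨i + 1, -j, ?_⟩
      change a q ^ i * b q ^ j * a q = _
      rw [mul_assoc, zpow_b_mul_a, zpow_add_one, mul_assoc]
    · refine ⟨i, j + 1, ?_⟩
      change a q ^ i * b q ^ j * b q = _
      rw [zpow_add_one, mul_assoc]
  | mul_inv_cancel x hx y hy ih =>
    obtain ⟨i, j, rfl⟩ := ih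
    obtain ⟨k, rfl⟩ := hy
    fin_cases k
    · refine ⟨i - 1, -j, ?_⟩
      change a q ^ i * b q ^ j * (a q)⁻¹ = _
      rw [mul_assoc, zpow_b_mul_a_inv, zpow_sub_one, mul_assoc]
    · refine ⟨i, j - 1, ?_⟩
      change a q ^ i * b q ^ j * (b q)⁻¹ = _
      rw [zpow_sub_one, mul_assoc]

lemma a_sq_mem_center : a q ^ 2 ∈ Subgroup.center (QGrp q) := by
  have hb : Commute (b q) (a q ^ 2) := by
    have h1 := zpow_b_mul_a q 1
    have h2 := zpow_b_mul_a q (-1)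
    rw [neg_neg] at h2
    have : b q ^ (1 : ℤ) * a q ^ 2 = a q ^ 2 * b q ^ (1 : ℤ) := by
      rw [pow_two, ← mul_assoc, h1, mul_assoc, h2, mul_assoc]
    simpa [Commute, SemiconjBy] using this
  rw [Subgroup.mem_center_iff]
  intro x
  obtain ⟨i, j, rfl⟩ := exists_normal_form q x
  exact (((Commute.refl (a q)).pow_right 2).zpow_left i).mul_left (hb.zpow_left j)

/-- The homomorphism `Q → D∞` with `a ↦ sr 0` and `b ↦ r 1`. -/
def toDihedral : QGrp q →* DihedralGroup 0 :=
  PresentedGroup.toGroup (f := ![DihedralGroup.sr 0, DihedralGroup.r 1]) (by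
    rintro x (rfl | rfl)
    · simp [pow_mul, pow_two]
    · simp)

/-- The homomorphism `Q → ℤ/2q` with `a ↦ 1` and `b ↦ 0`. -/
def toZMod : QGrp q →* Multiplicative (ZMod (2 * q)) :=
  PresentedGroup.toGroup (f := ![Multiplicative.ofAdd 1, 1]) (by
    rintro x (rfl | rfl)
    · simp only [map_pow, FreeGroup.lift_apply_of, Matrix.cons_val_zero, ← ofAdd_nsmul, nsmul_one,
        ZMod.natCast_self, ofAdd_zero]
    · simp)

@[simp] lemma toDihedral_a : toDihedral q (a q) = DihedralGroup.sr 0 :=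
  PresentedGroup.toGroup.of _

@[simp] lemma toDihedral_b : toDihedral q (b q) = DihedralGroup.r 1 :=
  PresentedGroup.toGroup.of _

@[simp] lemma toZMod_a : toZMod q (a q) = Multiplicative.ofAdd 1 :=
  PresentedGroup.toGroup.of _

lemma toDihedral_even (k j : ℤ) :
    toDihedral q (a q ^ (k + k) * b q ^ j) = DihedralGroup.r (Int.cast j) := by
  simp [← two_mul, zpow_mul, pow_two]

lemma toDihedral_odd (k j : ℤ) :
    toDihedral q (a q ^ (2 * k + 1) * b q ^ j) = DihedralGroup.sr (Int.cast j) := by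
  simp [zpow_add, zpow_mul, pow_two]

lemma toDihedral_surjective : Function.Surjective (toDihedral q) := by
  rintro (j | j) <;> obtain ⟨j, rfl⟩ := ZMod.intCast_surjective j
  · exact ⟨_, toDihedral_even q 0 j⟩
  · exact ⟨_, toDihedral_odd q 0 j⟩

lemma zpowers_le_center : Subgroup.zpowers (a q ^ 2) ≤ Subgroup.center (QGrp q) := by
  simpa using a_sq_mem_center q

lemma ker_le_zpowers : (toDihedral q).ker ≤ Subgroup.zpowers (a q ^ 2) := by
  intro x hx
  rw [MonoidHom.mem_ker] at hx
  obtain ⟨i, j, rfl⟩ := exists_normal_form q x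
  obtain ⟨k, rfl⟩ | ⟨k, rfl⟩ := Int.even_or_odd i
  · rw [toDihedral_even, DihedralGroup.one_def, DihedralGroup.r.injEq] at hx
    have hj : j = 0 := by simpa [ZMod.intCast_zmod_eq_zero_iff_dvd] using hx
    subst hj
    refine ⟨k, ?_⟩
    simp [pow_two, zpow_add, (Commute.refl (a q)).mul_zpow]
  · rw [toDihedral_odd, DihedralGroup.one_def] at hx
    cases hx

lemma center_dihedral_zero {x : DihedralGroup 0} (hx : x ∈ Subgroup.center (DihedralGroup 0)) :
    x = 1 := by
  rw [Subgroup.mem_center_iff] at hx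
  -- `ZMod 0` is `ℤ` by definition, which makes the equations of exponents integer ones.
  obtain j | j := x
  · have h := hx (DihedralGroup.sr 0)
    rw [DihedralGroup.sr_mul_r, DihedralGroup.r_mul_sr, DihedralGroup.sr.injEq] at h
    have key : ∀ k : ℤ, 0 + k = 0 - k → k = 0 := by omega
    rw [DihedralGroup.one_def]
    exact congrArg _ (key j h)
  · have h := hx (DihedralGroup.r 1)
    rw [DihedralGroup.sr_mul_r, DihedralGroup.r_mul_sr, DihedralGroup.sr.injEq] at h
    have key : ∀ k : ℤ, k - 1 ≠ k + 1 := by omega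
    exact absurd h (key j)

lemma center_le_ker : Subgroup.center (QGrp q) ≤ (toDihedral q).ker := by
  intro z hz
  rw [MonoidHom.mem_ker]
  apply center_dihedral_zero
  rw [Subgroup.mem_center_iff] at hz ⊢
  intro g
  obtain ⟨y, rfl⟩ := toDihedral_surjective q g
  rw [← map_mul, hz, map_mul]

lemma center_eq_zpowers : Subgroup.center (QGrp q) = Subgroup.zpowers (a q ^ 2) :=
  le_antisymm ((center_le_ker q).trans (ker_le_zpowers q)) (zpowers_le_center q)

lemma center_eq_ker : Subgroup.center (QGrp q) = (toDihedral q).ker :=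
  le_antisymm (center_le_ker q) ((ker_le_zpowers q).trans (zpowers_le_center q))

lemma orderOf_a : orderOf (a q) = 2 * q := by
  apply Nat.dvd_antisymm (orderOf_dvd_of_pow_eq_one (a_pow q))
  have h := orderOf_map_dvd (toZMod q) (a q)
  rwa [toZMod_a, orderOf_ofAdd_eq_addOrderOf, ZMod.addOrderOf_one] at h

lemma orderOf_a_sq : orderOf (a q ^ 2) = q := by
  rw [orderOf_pow_of_dvd two_ne_zero (by simp [orderOf_a]), orderOf_a]
  omega

end QGrp

/-- for `q ≥ 1`, the center of `Q = ⟨a, b ∣ a^(2q) = 1, a⁻¹ba = b⁻¹⟩` is the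
subgroup generated by the image of `a²`, it is cyclic of order `q`, every central element `z`
satisfies `z^q = 1` (so `Z(Q) = Z_q(Q)`), and `Q/Z(Q) ≅ D∞`.  This is the witness showing
`D∞` is `q`-capable. -/
theorem center_QGrp (q : ℕ) (hq : 1 ≤ q) :
    Subgroup.center (QGrp q) = Subgroup.closure {(PresentedGroup.of (0 : Fin 2)) ^ 2} ∧
    IsCyclic (Subgroup.center (QGrp q)) ∧
    Nat.card (Subgroup.center (QGrp q)) = q ∧
    (∀ z ∈ Subgroup.center (QGrp q), z ^ q = 1) ∧
    Nonempty ((QGrp q ⧸ Subgroup.center (QGrp q)) ≃* DihedralGroup 0) := by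
  have hc := QGrp.center_eq_zpowers q
  have hcard : Nat.card (Subgroup.center (QGrp q)) = q := by
    rw [hc, Nat.card_zpowers, QGrp.orderOf_a_sq q]
  refine ⟨?_, ?_, hcard, ?_, ?_⟩
  · rw [hc, Subgroup.zpowers_eq_closure]
    rfl
  · rw [hc]
    infer_instance
  · intro z hz
    have h := pow_card_eq_one' (x := (⟨z, hz⟩ : Subgroup.center (QGrp q)))
    rw [hcard] at h
    exact congrArg Subtype.val h
  · exact ⟨(QuotientGroup.quotientMulEquivOfEq (QGrp.center_eq_ker q)).trans
      (QuotientGroup.quotientKerEquivOfSurjective _ (QGrp.toDihedral_surjective q))⟩
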